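/- arXiv:1911.10499 — 2 statements merged into one kernel-verified Lean document; each statement's English description precedes it below -/
import Mathlib

section
/- Let ε > 0 and let Q be a privacy protocol satisfying ε-LDP, all of whose entries are positive and whose rank is a, and let μ be a Borel probability measure on the simplex 𝒫 having a continuous density, with p ↦ log det D_p μ-integrable. Then γ_μ(Q) ≥ (a−1) · log( √(2πe) / (e^ε − 1) ). -/
/-!
For `p` in the simplex, `D_p` is the Gram matrix of the columns of `Q` for the inner product with
weights `1 / (Qp)_y`. Put `s = e^ε - 1` and pass from the columns `Q_x` to the vectors `s Qp` and
`Q_x - Q_{x₀}`, `x ≠ x₀`: as `∑ x, p x = 1`, this change of basis has determinant `s`, so the new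
Gram matrix has determinant `s² det D_p`. Privacy gives `|Q_{y|x} - Q_{y|x₀}| ≤ s (Qp)_y`, whence
every new vector has squared norm at most `∑ y, s² (Qp)_y = s²`. By the arithmetic-geometric mean
inequality for the eigenvalues `s² det D_p ≤ s^(2a)`. Full rank makes `D_p` positive definite on the
simplex, so `log det D_p` is continuous there and at most `2 (a - 1) log s`, and it remains to
integrate over `p`.
-/

open MeasureTheory Matrix Finset Filter Real

noncomputable section

/-- The probability simplex in `ℝ^a`. -/
def simplex (a : ℕ) : Set (Fin a → ℝ) :=
  {p | (∀ x, 0 ≤ p x) ∧ ∑ x, p x = 1}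

/-- Likelihood `L_y(p) = ∏ i, (Qp)_{y i}`. -/
def lik {a b n : ℕ} (Q : Matrix (Fin b) (Fin a) ℝ) (y : Fin n → Fin b)
    (p : Fin a → ℝ) : ℝ :=
  ∏ i, Q.mulVec p (y i)

/-- Mean squared error for distribution estimation. -/
def MSEdistr {a b n : ℕ} (Q : Matrix (Fin b) (Fin a) ℝ) (μ : Measure (Fin a → ℝ))
    (Est : (Fin n → Fin b) → (Fin a → ℝ)) : ℝ :=
  ∑ y : (Fin n → Fin b), ∫ p, (∑ x, (p x - Est y x) ^ 2) * lik Q y p ∂μ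

/-- The posterior-mean estimator for distribution estimation. -/
def PiOpt {a b n : ℕ} (Q : Matrix (Fin b) (Fin a) ℝ) (μ : Measure (Fin a → ℝ))
    (y : Fin n → Fin b) : Fin a → ℝ :=
  fun x => (∫ p, p x * lik Q y p ∂μ) / (∫ p, lik Q y p ∂μ)

/-- Empirical frequency vector of a data vector. -/
def freqVec {a n : ℕ} (xv : Fin n → Fin a) : Fin a → ℝ :=
  fun α => ((Finset.univ.filter fun i => xv i = α).card : ℝ) / n

/-- Joint weight `w(x⃗,y⃗) = ∫ ∏ i, p_{x_i} Q_{y_i|x_i} dμ(p)`. -/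
def wgt {a b n : ℕ} (Q : Matrix (Fin b) (Fin a) ℝ) (μ : Measure (Fin a → ℝ))
    (xv : Fin n → Fin a) (y : Fin n → Fin b) : ℝ :=
  ∫ p, (∏ i, p (xv i) * Q (y i) (xv i)) ∂μ

/-- Mean squared error for frequency estimation. -/
def MSEfreq {a b n : ℕ} (Q : Matrix (Fin b) (Fin a) ℝ) (μ : Measure (Fin a → ℝ))
    (Est : (Fin n → Fin b) → (Fin a → ℝ)) : ℝ :=
  ∑ xv : (Fin n → Fin a), ∑ y : (Fin n → Fin b),
    wgt Q μ xv y * ∑ α, (freqVec xv α - Est y α) ^ 2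

/-- The posterior-mean estimator for frequency estimation. -/
def PhiOpt {a b n : ℕ} (Q : Matrix (Fin b) (Fin a) ℝ) (μ : Measure (Fin a → ℝ))
    (y : Fin n → Fin b) : Fin a → ℝ :=
  fun α => (∑ xv : (Fin n → Fin a), wgt Q μ xv y * freqVec xv α) /
    (∑ xv : (Fin n → Fin a), wgt Q μ xv y)

/-- `P(φ, y⃗) = ∑_{x⃗ : F(x⃗) = φ} w(x⃗, y⃗)`. -/
def Pphi {a b n : ℕ} (Q : Matrix (Fin b) (Fin a) ℝ) (μ : Measure (Fin a → ℝ))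
    (φ : Fin a → ℝ) (y : Fin n → Fin b) : ℝ := by
  classical
  exact ∑ xv ∈ Finset.univ.filter (fun xv : Fin n → Fin a => freqVec xv = φ), wgt Q μ xv y

/-- Conditional Shannon entropy `H_n(F | Y⃗)` (terms with zero probability vanish since
`Real.log 0 = 0`). -/
def HFcond {a b : ℕ} (Q : Matrix (Fin b) (Fin a) ℝ) (μ : Measure (Fin a → ℝ))
    (n : ℕ) : ℝ := by
  classical
  exact -(∑ y : (Fin n → Fin b), ∑ φ ∈ Finset.image (freqVec (a := a) (n := n)) Finset.univ,
      Pphi Q μ φ y * Real.log (Pphi Q μ φ y /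
        ∑ φ' ∈ Finset.image (freqVec (a := a) (n := n)) Finset.univ, Pphi Q μ φ' y))

/-- The set `Δ = {q ∈ ℝ^m : q ≥ 0, ∑ q ≤ 1}`. -/
def stdCorner (m : ℕ) : Set (Fin m → ℝ) :=
  {q | (∀ i, 0 ≤ q i) ∧ ∑ i, q i ≤ 1}

/-- The identification `Δ ⊂ ℝ^{a-1} → 𝒫 ⊂ ℝ^a`,
`q ↦ (q_1, …, q_{a-1}, 1 - ∑ q_i)`. -/
def emb (a : ℕ) (q : Fin (a - 1) → ℝ) : Fin a → ℝ :=
  fun x => if h : (x : ℕ) < a - 1 then q ⟨x.1, h⟩ else 1 - ∑ i, q i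

/-- `μ` has density `f` (w.r.t. Lebesgue measure on `Δ`). -/
def IsDensity {a : ℕ} (μ : Measure (Fin a → ℝ)) (f : (Fin (a - 1) → ℝ) → ℝ) : Prop :=
  Measurable f ∧ (∀ q, 0 ≤ f q) ∧ (∫ q in stdCorner (a - 1), f q) = 1 ∧
  ∀ g : (Fin a → ℝ) → ℝ, Measurable g → (∃ C, ∀ p, |g p| ≤ C) →
    (∫ p, g p ∂μ) = ∫ q in stdCorner (a - 1), g (emb a q) * f q

/-- `μ` has continuous density `f`. -/
def IsContDensity {a : ℕ} (μ : Measure (Fin a → ℝ)) (f : (Fin (a - 1) → ℝ) → ℝ) : Prop :=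
  ContinuousOn f (stdCorner (a - 1)) ∧ (∀ q, 0 ≤ f q) ∧
  (∫ q in stdCorner (a - 1), f q) = 1 ∧
  ∀ g : (Fin a → ℝ) → ℝ, Measurable g → (∃ C, ∀ p, |g p| ≤ C) →
    (∫ p, g p ∂μ) = ∫ q in stdCorner (a - 1), g (emb a q) * f q

/-- Normalisation constant `C_{y⃗} = ∫_Δ f(q) L_{y⃗}(p(q)) dλ(q)`. -/
def Cw {a b n : ℕ} (Q : Matrix (Fin b) (Fin a) ℝ) (f : (Fin (a - 1) → ℝ) → ℝ)
    (y : Fin n → Fin b) : ℝ :=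
  ∫ q in stdCorner (a - 1), f q * lik Q y (emb a q)

/-- Posterior density `g_{y⃗}(q) = f(q) L_{y⃗}(p(q)) / C_{y⃗}`. -/
def gpost {a b n : ℕ} (Q : Matrix (Fin b) (Fin a) ℝ) (f : (Fin (a - 1) → ℝ) → ℝ)
    (y : Fin n → Fin b) (q : Fin (a - 1) → ℝ) : ℝ :=
  f q * lik Q y (emb a q) / Cw Q f y

/-- Conditional differential entropy `h_n(P | Y⃗)`. -/
def hCond {a b : ℕ} (Q : Matrix (Fin b) (Fin a) ℝ) (f : (Fin (a - 1) → ℝ) → ℝ)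
    (n : ℕ) : ℝ :=
  ∑ y : (Fin n → Fin b),
    Cw Q f y * (-(∫ q in stdCorner (a - 1), gpost Q f y q * Real.log (gpost Q f y q)))

/-- The matrix `D_p = Qᵀ · diag(Qp)⁻¹ · Q`. -/
def Dmat {a b : ℕ} (Q : Matrix (Fin b) (Fin a) ℝ) (p : Fin a → ℝ) :
    Matrix (Fin a) (Fin a) ℝ :=
  Qᵀ * Matrix.diagonal (fun y => (Q.mulVec p y)⁻¹) * Q

/-- The constant `γ_μ(Q)`. -/
def gammaMu {a b : ℕ} (Q : Matrix (Fin b) (Fin a) ℝ) (μ : Measure (Fin a → ℝ)) : ℝ :=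
  (((a : ℝ) - 1) / 2) * Real.log (2 * π * Real.exp 1) -
    (1 / 2) * ∫ p, Real.log (Dmat Q p).det ∂μ

/-- The truncated column `w_x = (Q_{1|x}, …, Q_{b-1|x})`. -/
def wcol {a b : ℕ} (Q : Matrix (Fin b) (Fin a) ℝ) (x : Fin a) : Fin (b - 1) → ℝ :=
  fun y => Q ⟨y.1, lt_of_lt_of_le y.2 (Nat.sub_le b 1)⟩ x

/-- The matrix `E_x = diag(w_x) - w_x w_xᵀ`. -/
def Emat {a b : ℕ} (Q : Matrix (Fin b) (Fin a) ℝ) (x : Fin a) :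
    Matrix (Fin (b - 1)) (Fin (b - 1)) ℝ :=
  Matrix.diagonal (wcol Q x) - Matrix.vecMulVec (wcol Q x) (wcol Q x)

/-- The matrix `G_p = ∑ x, p_x E_x`. -/
def Gmat {a b : ℕ} (Q : Matrix (Fin b) (Fin a) ℝ) (p : Fin a → ℝ) :
    Matrix (Fin (b - 1)) (Fin (b - 1)) ℝ :=
  ∑ x, p x • Emat Q x

/-- The constant `δ_μ(Q)`. -/
def deltaMu {a b : ℕ} (Q : Matrix (Fin b) (Fin a) ℝ) (μ : Measure (Fin a → ℝ)) : ℝ :=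
  gammaMu Q μ +
    (1 / 2) * ∫ p, (Real.log (Gmat Q p).det - ∑ y, Real.log (Q.mulVec p y)) ∂μ

/-- `Q` satisfies `ε`-local differential privacy. -/
def SatisfiesLDP {a b : ℕ} (Q : Matrix (Fin b) (Fin a) ℝ) (ε : ℝ) : Prop :=
  ∀ x x' : Fin a, ∀ y : Fin b, Q y x' ≤ Real.exp ε * Q y x

section Gram

lemma sum_inv_mul_sq_le {m : Type*} [Fintype m] {v u : m → ℝ} {s : ℝ} (hv : ∀ y, 0 ≤ v y)
    (hu : ∀ y, |u y| ≤ s * v y) : ∑ y, (v y)⁻¹ * u y ^ 2 ≤ s ^ 2 * ∑ y, v y := by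
  rw [Finset.mul_sum]
  refine Finset.sum_le_sum fun y _ ↦ ?_
  calc (v y)⁻¹ * u y ^ 2 ≤ (v y)⁻¹ * (s * v y) ^ 2 :=
        mul_le_mul_of_nonneg_left (sq_le_sq' (abs_le.1 (hu y)).1 (abs_le.1 (hu y)).2)
          (inv_nonneg.2 (hv y))
    _ = s ^ 2 * ((v y)⁻¹ * v y * v y) := by ring
    _ = s ^ 2 * v y := by rw [inv_mul_mul_self]

variable {m n : Type*} [Fintype m] [DecidableEq m]

lemma posSemidef_transpose_mul_diagonal_mul [Finite n] {w : m → ℝ} (hw : 0 ≤ w) (B : Matrix m n ℝ) :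
    (Bᵀ * diagonal w * B).PosSemidef := by
  simpa [conjTranspose_eq_transpose_of_trivial] using
    (PosSemidef.diagonal hw).conjTranspose_mul_mul_same B

lemma transpose_mul_diagonal_mul_apply_self (w : m → ℝ) (B : Matrix m n ℝ) (x : n) :
    (Bᵀ * diagonal w * B) x x = ∑ y, w y * B y x ^ 2 := by
  rw [mul_apply]
  refine Finset.sum_congr rfl fun y _ ↦ ?_
  rw [mul_diagonal, transpose_apply]
  ring

variable [Fintype n] [DecidableEq n] {c : ℝ}

lemma det_le_pow_card_of_trace_le {A : Matrix n n ℝ} (hA : A.PosSemidef)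
    (htr : A.trace ≤ Fintype.card n * c) : A.det ≤ c ^ Fintype.card n := by
  cases isEmpty_or_nonempty n
  · simp
  have hcard : (0 : ℝ) < Fintype.card n := by exact_mod_cast Fintype.card_pos
  have hdet : A.det = ∏ i, hA.isHermitian.eigenvalues i := by
    simpa using hA.isHermitian.det_eq_prod_eigenvalues
  have htrace : A.trace = ∑ i, hA.isHermitian.eigenvalues i := by
    simpa using hA.isHermitian.trace_eq_sum_eigenvalues
  have hmean : A.det ^ (Fintype.card n : ℝ)⁻¹ ≤ A.trace / Fintype.card n := by
    simpa [hdet, htrace] using Real.geom_mean_le_arith_mean Finset.univ (fun _ ↦ (1 : ℝ))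
      hA.isHermitian.eigenvalues (by simp) (by simpa using hcard) fun i _ ↦ hA.eigenvalues_nonneg i
  calc A.det = (A.det ^ (Fintype.card n : ℝ)⁻¹) ^ Fintype.card n :=
        (Real.rpow_inv_natCast_pow hA.det_nonneg Fintype.card_ne_zero).symm
    _ ≤ c ^ Fintype.card n :=
        pow_le_pow_left₀ (Real.rpow_nonneg hA.det_nonneg _)
          (hmean.trans ((div_le_iff₀' hcard).2 htr)) _

lemma det_transpose_mul_diagonal_mul_le {w : m → ℝ} (hw : 0 ≤ w) {B : Matrix m n ℝ}
    (hB : ∀ x, ∑ y, w y * B y x ^ 2 ≤ c) :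
    (Bᵀ * diagonal w * B).det ≤ c ^ Fintype.card n := by
  refine det_le_pow_card_of_trace_le (posSemidef_transpose_mul_diagonal_mul hw B) ?_
  calc (Bᵀ * diagonal w * B).trace ≤ ∑ _x : n, c :=
        Finset.sum_le_sum fun x _ ↦ (transpose_mul_diagonal_mul_apply_self w B x).trans_le (hB x)
    _ = Fintype.card n * c := by simp

end Gram

section PivotBasis

variable {m n R : Type*} [DecidableEq n]

/-- The matrix with column `u` at the pivot `i₀` and columns `e_i - e_{i₀}` elsewhere, written as a
perturbation of the identity by two rank-one matrices. Multiplying by it on the right replaces the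
columns `Q_x` of a matrix by `Qu` and the differences `Q_x - Q_{i₀}`. -/
def pivotBasis [Ring R] (i₀ : n) (u : n → R) : Matrix n n R :=
  1 - vecMulVec (Pi.single i₀ 1) 1 + vecMulVec u (Pi.single i₀ 1)

variable [Fintype n]

lemma det_pivotBasis [CommRing R] (i₀ : n) (u : n → R) : (pivotBasis i₀ u).det = ∑ i, u i := by
  have hfactor : pivotBasis i₀ u =
      1 + (of ![-Pi.single i₀ 1, u])ᵀ * of ![(1 : n → R), Pi.single i₀ 1] := by
    ext i j
    simp [pivotBasis, vecMulVec_apply, mul_apply, Fin.sum_univ_two, sub_eq_add_neg, add_assoc]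
  rw [hfactor, det_one_add_mul_comm, det_fin_two]
  simp [vecMul, dotProduct]

lemma mul_pivotBasis_apply [Ring R] (Q : Matrix m n R) (i₀ : n) (u : n → R) (y : m) (x : n) :
    (Q * pivotBasis i₀ u) y x = Q y x - Q y i₀ + if x = i₀ then (Q *ᵥ u) y else 0 := by
  simp only [pivotBasis, Matrix.mul_add, Matrix.mul_sub, Matrix.mul_one, mul_vecMulVec]
  simp [vecMulVec_apply, Pi.single_apply]

end PivotBasis

section Stochastic

variable {m n : Type*} [Fintype n]

lemma mulVec_apply_mem_of_convex {Q : Matrix m n ℝ} {p : n → ℝ} (hp : p ∈ stdSimplex ℝ n)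
    {S : Set ℝ} (hS : Convex ℝ S) {y : m} (hQ : ∀ x, Q y x ∈ S) : (Q *ᵥ p) y ∈ S := by
  have hmem : ∑ x, p x • Q y x ∈ S := hS.sum_mem (fun x _ ↦ hp.1 x) hp.2 fun x _ ↦ hQ x
  simpa only [mulVec, dotProduct, smul_eq_mul, mul_comm] using hmem

lemma sum_mulVec_of_sum_col_eq_one [Fintype m] {R : Type*} [Semiring R] {Q : Matrix m n R}
    (hQcol : ∀ x, ∑ y, Q y x = 1) (p : n → R) : ∑ y, (Q *ᵥ p) y = ∑ x, p x := by
  simp only [mulVec, dotProduct]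
  rw [Finset.sum_comm]
  simp [← Finset.sum_mul, hQcol]

end Stochastic

section Protocol

variable {a b : ℕ} {Q : Matrix (Fin b) (Fin a) ℝ} {p : Fin a → ℝ} {ε : ℝ}

lemma SatisfiesLDP.sub_le_mul (hLDP : SatisfiesLDP Q ε) (hε : 0 ≤ ε) (y : Fin b) (x x' z : Fin a) :
    Q y x - Q y x' ≤ (Real.exp ε - 1) * Q y z := by
  have hs : 0 ≤ Real.exp ε - 1 := sub_nonneg.2 (Real.one_le_exp hε)
  rcases le_total (Q y x') (Q y z) with hle | hle
  · linarith [hLDP x' x y, mul_le_mul_of_nonneg_left hle hs]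
  · linarith [hLDP z x y]

lemma SatisfiesLDP.abs_sub_le_mul_mulVec (hLDP : SatisfiesLDP Q ε) (hε : 0 < ε)
    (hp : p ∈ simplex a) (y : Fin b) (x x' : Fin a) :
    |Q y x - Q y x'| ≤ (Real.exp ε - 1) * (Q *ᵥ p) y := by
  have hs : 0 < Real.exp ε - 1 := sub_pos.2 (Real.one_lt_exp_iff.2 hε)
  rw [← div_le_iff₀' hs]
  refine mulVec_apply_mem_of_convex hp (convex_Ici _) fun z ↦ (div_le_iff₀' hs).2 ?_
  exact abs_sub_le_iff.2 ⟨hLDP.sub_le_mul hε.le y x x' z, hLDP.sub_le_mul hε.le y x' x z⟩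

lemma mulVec_pos_of_mem_simplex (hQpos : ∀ y x, 0 < Q y x) (hp : p ∈ simplex a) (y : Fin b) :
    0 < (Q *ᵥ p) y :=
  mulVec_apply_mem_of_convex hp (convex_Ioi 0) (hQpos y)

lemma posDef_Dmat (hQpos : ∀ y x, 0 < Q y x) (hrank : Q.rank = a) (hp : p ∈ simplex a) :
    (Dmat Q p).PosDef := by
  have hinj : Function.Injective Q.mulVec := by
    rw [mulVec_injective_iff, linearIndependent_iff_card_eq_finrank_span, Set.finrank,
      ← rank_eq_finrank_span_cols, hrank, Fintype.card_fin]
  have hdiag : (diagonal fun y ↦ ((Q *ᵥ p) y)⁻¹).PosDef :=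
    PosDef.diagonal fun y ↦ inv_pos.2 (mulVec_pos_of_mem_simplex hQpos hp y)
  simpa [Dmat, conjTranspose_eq_transpose_of_trivial] using hdiag.conjTranspose_mul_mul_same hinj

lemma det_transpose_mul_diagonal_mul_eq_det_Dmat (T : Matrix (Fin a) (Fin a) ℝ) :
    ((Q * T)ᵀ * diagonal (fun y ↦ ((Q *ᵥ p) y)⁻¹) * (Q * T)).det =
      T.det ^ 2 * (Dmat Q p).det := by
  have hcongr : (Q * T)ᵀ * diagonal (fun y ↦ ((Q *ᵥ p) y)⁻¹) * (Q * T) = Tᵀ * Dmat Q p * T := by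
    simp only [Dmat, transpose_mul, Matrix.mul_assoc]
  rw [hcongr, det_mul, det_mul, det_transpose]
  ring

lemma det_Dmat_le_of_abs_sub_le {s : ℝ} (hs : 0 < s) (hQcol : ∀ x, ∑ y, Q y x = 1)
    (hp : ∑ x, p x = 1) (hQ : ∀ y x x', |Q y x - Q y x'| ≤ s * (Q *ᵥ p) y) :
    (Dmat Q p).det ≤ (s ^ 2) ^ (a - 1) := by
  obtain ⟨x₀, -, -⟩ : ∃ x₀ ∈ Finset.univ, p x₀ ≠ 0 :=
    Finset.exists_ne_zero_of_sum_ne_zero (by simp [hp])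
  have hQp (y) : 0 ≤ (Q *ᵥ p) y :=
    nonneg_of_mul_nonneg_right ((abs_nonneg _).trans (hQ y x₀ x₀)) hs
  -- The multiple `s p` in place of `p` gives all columns of `Q * T` the same bound.
  set T := pivotBasis x₀ (s • p)
  have hT : T.det = s := by simp [T, det_pivotBasis, ← Finset.mul_sum, hp]
  have hentry (y x) : |(Q * T) y x| ≤ s * (Q *ᵥ p) y := by
    rw [mul_pivotBasis_apply]
    split_ifs with hx
    · simp [hx, mulVec_smul, abs_of_nonneg (hQp y), abs_of_pos hs]
    · simpa using hQ y x x₀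
  have hcol (x) : ∑ y, ((Q *ᵥ p) y)⁻¹ * (Q * T) y x ^ 2 ≤ s ^ 2 := by
    simpa [sum_mulVec_of_sum_col_eq_one hQcol, hp] using
      sum_inv_mul_sq_le hQp fun y ↦ hentry y x
  have hdet : s ^ 2 * (Dmat Q p).det ≤ (s ^ 2) ^ a := by
    simpa only [det_transpose_mul_diagonal_mul_eq_det_Dmat, hT, Fintype.card_fin] using
      det_transpose_mul_diagonal_mul_le (fun y ↦ inv_nonneg.2 (hQp y)) hcol
  rw [← mul_pow_sub_one x₀.pos.ne'] at hdet
  exact le_of_mul_le_mul_left hdet (by positivity)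

lemma log_det_Dmat_le (hQpos : ∀ y x, 0 < Q y x) (hQcol : ∀ x, ∑ y, Q y x = 1)
    (hrank : Q.rank = a) (hε : 0 < ε) (hLDP : SatisfiesLDP Q ε) (hp : p ∈ simplex a) :
    Real.log (Dmat Q p).det ≤ 2 * ((a : ℝ) - 1) * Real.log (Real.exp ε - 1) := by
  have ha : 0 < a := Nat.pos_of_ne_zero <| by rintro rfl; simpa using hp.2
  have hs : 0 < Real.exp ε - 1 := sub_pos.2 (Real.one_lt_exp_iff.2 hε)
  calc Real.log (Dmat Q p).det ≤ Real.log (((Real.exp ε - 1) ^ 2) ^ (a - 1)) :=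
        Real.log_le_log (posDef_Dmat hQpos hrank hp).det_pos
          (det_Dmat_le_of_abs_sub_le hs hQcol hp.2 (hLDP.abs_sub_le_mul_mulVec hε hp))
    _ = 2 * ((a : ℝ) - 1) * Real.log (Real.exp ε - 1) := by
        rw [Real.log_pow, Real.log_pow, Nat.cast_pred ha]
        push_cast
        ring

lemma continuousOn_log_det_Dmat (hQpos : ∀ y x, 0 < Q y x) (hrank : Q.rank = a) :
    ContinuousOn (fun p ↦ Real.log (Dmat Q p).det) (simplex a) := by
  have hdet : Continuous fun w : Fin b → ℝ ↦ (Qᵀ * diagonal w * Q).det := by fun_prop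
  have hinv : ContinuousOn (fun (p : Fin a → ℝ) y ↦ ((Q *ᵥ p) y)⁻¹) (simplex a) :=
    continuousOn_pi.2 fun y ↦ ContinuousOn.inv₀ (by fun_prop)
      fun p hp ↦ (mulVec_pos_of_mem_simplex hQpos hp y).ne'
  exact (hdet.comp_continuousOn hinv).log fun p hp ↦ (posDef_Dmat hQpos hrank hp).det_pos.ne'

end Protocol

section Support

variable {a : ℕ} {μ : Measure (Fin a → ℝ)} [IsFiniteMeasure μ]

lemma integrable_of_continuousOn_simplex {g : (Fin a → ℝ) → ℝ} (hg : ContinuousOn g (simplex a))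
    (hμ : ∀ᵐ p ∂μ, p ∈ simplex a) : Integrable g μ := by
  rw [← Measure.restrict_eq_self_of_ae_mem hμ]
  exact hg.integrableOn_compact (isCompact_stdSimplex ℝ (Fin a))

lemma emb_mem_simplex (ha : 0 < a) {q : Fin (a - 1) → ℝ} (hq : q ∈ stdCorner (a - 1)) :
    emb a q ∈ simplex a := by
  refine ⟨fun x ↦ ?_, ?_⟩
  · unfold emb
    split_ifs
    exacts [hq.1 _, sub_nonneg.2 hq.2]
  · obtain ⟨m, rfl⟩ := Nat.exists_eq_succ_of_ne_zero ha.ne'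
    rw [Fin.sum_univ_castSucc]
    simp [emb]

lemma IsContDensity.ae_mem_simplex {f : (Fin (a - 1) → ℝ) → ℝ} (hf : IsContDensity μ f)
    (ha : 0 < a) : ∀ᵐ p ∂μ, p ∈ simplex a := by
  obtain ⟨-, -, -, hdensity⟩ := hf
  have hmeas : MeasurableSet (simplex a)ᶜ :=
    (isClosed_stdSimplex ℝ (Fin a)).measurableSet.compl
  have hzero : μ.real (simplex a)ᶜ = 0 := by
    rw [← integral_indicator_one hmeas, hdensity _ (measurable_one.indicator hmeas)
      ⟨1, fun p ↦ by by_cases hp : p ∈ (simplex a)ᶜ <;> simp [hp]⟩]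
    exact setIntegral_eq_zero_of_forall_eq_zero fun q hq ↦ by simp [emb_mem_simplex ha hq]
  rwa [measureReal_eq_zero_iff] at hzero

end Support

theorem gammaMu_ge_LDP_bound_general {a b : ℕ} {Q : Matrix (Fin b) (Fin a) ℝ}
    (hQpos : ∀ y x, 0 < Q y x) (hQcol : ∀ x, ∑ y, Q y x = 1) (hrank : Q.rank = a)
    {μ : Measure (Fin a → ℝ)} [IsProbabilityMeasure μ] (hμ : ∀ᵐ p ∂μ, p ∈ simplex a)
    {ε : ℝ} (hε : 0 < ε) (hLDP : SatisfiesLDP Q ε) :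
    ((a : ℝ) - 1) * Real.log (Real.sqrt (2 * π * Real.exp 1) / (Real.exp ε - 1)) ≤
      gammaMu Q μ := by
  have hs : 0 < Real.exp ε - 1 := sub_pos.2 (Real.one_lt_exp_iff.2 hε)
  have hc : 0 < 2 * π * Real.exp 1 := by positivity
  have hbound : ∫ p, Real.log (Dmat Q p).det ∂μ ≤
      ∫ _p, 2 * ((a : ℝ) - 1) * Real.log (Real.exp ε - 1) ∂μ :=
    integral_mono_ae
      (integrable_of_continuousOn_simplex (continuousOn_log_det_Dmat hQpos hrank) hμ)
      (integrable_const _) (hμ.mono fun p hp ↦ log_det_Dmat_le hQpos hQcol hrank hε hLDP hp)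
  rw [integral_const, probReal_univ, one_smul] at hbound
  rw [gammaMu, Real.log_div (Real.sqrt_pos.2 hc).ne' hs.ne', Real.log_sqrt hc.le]
  linarith

/-- lower bound on `γ_μ(Q)` via the LDP parameter `ε`. -/
theorem gammaMu_ge_LDP_bound {a b : ℕ} (ha : 2 ≤ a) (hb : 2 ≤ b)
    (Q : Matrix (Fin b) (Fin a) ℝ)
    (hQpos : ∀ y x, 0 < Q y x) (hQcol : ∀ x, ∑ y, Q y x = 1)
    (μ : Measure (Fin a → ℝ)) [IsProbabilityMeasure μ]
    (hrank : Q.rank = a)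
    (f : (Fin (a - 1) → ℝ) → ℝ) (hf : IsContDensity μ f)
    (hint : Integrable (fun p => Real.log (Dmat Q p).det) μ)
    (ε : ℝ) (hε : 0 < ε) (hLDP : SatisfiesLDP Q ε) :
    ((a : ℝ) - 1) * Real.log (Real.sqrt (2 * π * Real.exp 1) / (Real.exp ε - 1)) ≤
      gammaMu Q μ := by
  exact gammaMu_ge_LDP_bound_general hQpos hQcol hrank (hf.ae_mem_simplex (by omega)) hε hLDP

end
end

section
/- Let ε > 0, n ≥ 1, a = b = 2, and let μ be a Borel probability measure on the simplex 𝒫 ⊂ ℝ². Then the randomised response protocol RR_ε with the estimator Π_RR satisfies MSE^distr_{μ,n}(RR_ε, Π_RR) = (2/n) · ( e^ε/(e^ε−1)² + ∫_𝒫 p_1 p_2 dμ(p) ). -/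
/-!
For fixed `p` the outputs `y i` are i.i.d. with law `Qp`. If `T` is a left inverse of `Q`, then the
column `T_{· y}` of a single output is an unbiased estimate of `p`, and averaging over `n` outputs
divides its variance by `n`. Randomised response is an invertible protocol and `Π_RR` is the average
belonging to its inverse. The columns of that inverse all have the same squared length, so the
variance of one output is a constant minus `p_1² + p_2²`, and `1 - p_1² - p_2² = 2 p_1 p_2`.
-/

open MeasureTheory Matrix Finset Filter Real

noncomputable section

/-- The randomised response protocol `RR_ε` for `a = b = 2`. -/
def RRmat (ε : ℝ) : Matrix (Fin 2) (Fin 2) ℝ :=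
  Matrix.of fun y x =>
    if y = x then Real.exp ε / (Real.exp ε + 1) else 1 / (Real.exp ε + 1)

/-- The tally `s_x(y⃗) = #{i : y_i = x}` as a real number. -/
def sTally {n : ℕ} (y : Fin n → Fin 2) (x : Fin 2) : ℝ :=
  ((Finset.univ.filter fun i => y i = x).card : ℝ)

/-- The unbiased randomised-response estimator `Π_RR = Φ_RR`. -/
def PiRR (ε : ℝ) {n : ℕ} (y : Fin n → Fin 2) : Fin 2 → ℝ :=
  fun x => ((Real.exp ε + 1) * sTally y x - n) / (n * (Real.exp ε - 1))

section ProductWeights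

variable {ι : Type*} [Fintype ι] [DecidableEq ι]

lemma sum_prod_mul_prod_of_sum_eq_one {R : Type*} [CommSemiring R] {κ : ι → Type*}
    [∀ i, Fintype (κ i)] {q : ∀ i, κ i → R} (hq : ∀ i, ∑ z, q i z = 1) (f : ∀ i, κ i → R)
    (s : Finset ι) :
    ∑ y : ∀ i, κ i, (∏ i ∈ s, f i (y i)) * ∏ i, q i (y i) = ∏ i ∈ s, ∑ z, f i z * q i z := by
  have factor (i : ι) :
      ∑ z, (if i ∈ s then f i z else 1) * q i z = if i ∈ s then ∑ z, f i z * q i z else 1 := by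
    split_ifs <;> simp [hq]
  simp_rw [← Fintype.prod_ite_mem s, ← factor, Fintype.prod_sum, prod_mul_distrib]

lemma sum_sum_sq_mul_prod_of_centered {R : Type*} [CommSemiring R] {κ : ι → Type*}
    [∀ i, Fintype (κ i)] {q d : ∀ i, κ i → R} (hq : ∀ i, ∑ z, q i z = 1)
    (hd : ∀ i, ∑ z, d i z * q i z = 0) :
    ∑ y : ∀ i, κ i, (∑ i, d i (y i)) ^ 2 * ∏ i, q i (y i) = ∑ i, ∑ z, d i z ^ 2 * q i z := by
  have off_diagonal {i j : ι} (hij : i ≠ j) :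
      ∑ y : ∀ i, κ i, d i (y i) * d j (y j) * ∏ k, q k (y k) = 0 := by
    simpa [prod_pair hij, hd] using sum_prod_mul_prod_of_sum_eq_one hq d {i, j}
  have diagonal (i : ι) :
      ∑ y : ∀ i, κ i, d i (y i) * d i (y i) * ∏ k, q k (y k) = ∑ z, d i z ^ 2 * q i z := by
    simpa [← sq] using sum_prod_mul_prod_of_sum_eq_one hq (fun k z => d k z ^ 2) {i}
  calc ∑ y : ∀ i, κ i, (∑ i, d i (y i)) ^ 2 * ∏ i, q i (y i)
      = ∑ i, ∑ j, ∑ y : ∀ i, κ i, d i (y i) * d j (y j) * ∏ k, q k (y k) := by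
        simp_rw [sq, sum_mul_sum, sum_mul]
        rw [sum_comm]
        exact sum_congr rfl fun i _ => sum_comm
    _ = ∑ i, ∑ z, d i z ^ 2 * q i z := sum_congr rfl fun i _ => by
        rw [Fintype.sum_eq_single i fun j hj => off_diagonal hj.symm, diagonal]

lemma sum_sub_mean_sq_mul {κ R : Type*} [Fintype κ] [CommRing R] {q t : κ → R} {m : R}
    (hq : ∑ z, q z = 1) (ht : ∑ z, t z * q z = m) :
    ∑ z, (t z - m) ^ 2 * q z = ∑ z, t z ^ 2 * q z - m ^ 2 := by
  calc ∑ z, (t z - m) ^ 2 * q z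
      = ∑ z, t z ^ 2 * q z - 2 * m * ∑ z, t z * q z + m ^ 2 * ∑ z, q z := by
        simp_rw [mul_sum, ← sum_sub_distrib, ← sum_add_distrib]
        exact sum_congr rfl fun z _ => by ring
    _ = ∑ z, t z ^ 2 * q z - m ^ 2 := by rw [ht, hq]; ring

lemma sum_mean_sub_average_sq_mul_prod {κ K : Type*} [Fintype κ] [Field K] {q t : κ → K} {m : K}
    (hq : ∑ z, q z = 1) (ht : ∑ z, t z * q z = m) (hι : (Fintype.card ι : K) ≠ 0) :
    ∑ y : ι → κ, (m - (∑ i, t (y i)) / Fintype.card ι) ^ 2 * ∏ i, q (y i) =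
      (∑ z, t z ^ 2 * q z - m ^ 2) / Fintype.card ι := by
  have centered : ∑ z, (t z - m) * q z = 0 := by
    simp_rw [sub_mul, sum_sub_distrib, ← mul_sum, ht, hq, mul_one, sub_self]
  have error_sq (y : ι → κ) : (m - (∑ i, t (y i)) / Fintype.card ι) ^ 2 =
      (∑ i, (t (y i) - m)) ^ 2 / (Fintype.card ι : K) ^ 2 := by
    rw [sum_sub_distrib, sum_const, card_univ, nsmul_eq_mul]
    field_simp
    ring
  calc ∑ y : ι → κ, (m - (∑ i, t (y i)) / Fintype.card ι) ^ 2 * ∏ i, q (y i)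
      = (∑ y : ι → κ, (∑ i, (t (y i) - m)) ^ 2 * ∏ i, q (y i)) / (Fintype.card ι : K) ^ 2 := by
        simp_rw [error_sq, div_mul_eq_mul_div, sum_div]
    _ = (∑ _i : ι, ∑ z, (t z - m) ^ 2 * q z) / (Fintype.card ι : K) ^ 2 := by
        rw [sum_sum_sq_mul_prod_of_centered (fun _ => hq) fun _ => centered]
    _ = (∑ z, t z ^ 2 * q z - m ^ 2) / Fintype.card ι := by
        rw [sum_const, card_univ, nsmul_eq_mul, sum_sub_mean_sq_mul hq ht]
        field_simp

end ProductWeights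

lemma sum_mulVec_of_sum_col_eq_one_s17 {m k R : Type*} [Fintype m] [Fintype k] [NonAssocSemiring R]
    {A : Matrix m k R} (hA : ∀ j, ∑ i, A i j = 1) (v : k → R) :
    ∑ i, (A *ᵥ v) i = ∑ j, v j := by
  simp_rw [mulVec, dotProduct]
  rw [sum_comm]
  simp_rw [← sum_mul, hA, one_mul]

lemma integrable_of_continuous_of_ae_mem_isCompact {X E : Type*} [TopologicalSpace X] [T2Space X]
    [MeasurableSpace X] [OpensMeasurableSpace X] [NormedAddCommGroup E]
    [SecondCountableTopologyEither X E] {μ : Measure X} [IsFiniteMeasureOnCompacts μ] {K : Set X}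
    (hK : IsCompact K) (hμ : ∀ᵐ x ∂μ, x ∈ K) {f : X → E} (hf : Continuous f) :
    Integrable f μ := by
  have := hf.continuousOn.integrableOn_compact (μ := μ) hK
  rwa [IntegrableOn, Measure.restrict_eq_self_of_ae_mem hμ] at this

lemma isCompact_simplex (a : ℕ) : IsCompact (simplex a) :=
  isCompact_stdSimplex (𝕜 := ℝ) (Fin a)

section LeftInverseEstimators

variable {a b n : ℕ} {Q : Matrix (Fin b) (Fin a) ℝ} {T : Matrix (Fin a) (Fin b) ℝ}

lemma continuous_lik (Q : Matrix (Fin b) (Fin a) ℝ) (y : Fin n → Fin b) :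
    Continuous (lik Q y) := by
  unfold lik mulVec dotProduct
  fun_prop

lemma MSEdistr_eq_integral {μ : Measure (Fin a → ℝ)} [IsFiniteMeasureOnCompacts μ]
    (hμ : ∀ᵐ p ∂μ, p ∈ simplex a) (Est : (Fin n → Fin b) → Fin a → ℝ) :
    MSEdistr Q μ Est = ∫ p, ∑ y, (∑ x, (p x - Est y x) ^ 2) * lik Q y p ∂μ := by
  refine (integral_finsetSum _ fun y _ => ?_).symm
  refine integrable_of_continuous_of_ae_mem_isCompact (isCompact_simplex a) hμ ?_
  exact Continuous.mul (by fun_prop) (continuous_lik Q y)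

/-- The estimator averaging the columns `T_{· y_i}` over the sample. It is unbiased for the protocol
`Q` when `T` is a left inverse of `Q`. -/
def averageEst (T : Matrix (Fin a) (Fin b) ℝ) (y : Fin n → Fin b) : Fin a → ℝ :=
  fun x => (∑ i, T x (y i)) / n

lemma sum_averageEst_sq_error_mul_lik (hQ : ∀ x, ∑ y, Q y x = 1) (hT : T * Q = 1) (hn : n ≠ 0)
    {p : Fin a → ℝ} (hp : ∑ x, p x = 1) :
    ∑ y : Fin n → Fin b, (∑ x, (p x - averageEst T y x) ^ 2) * lik Q y p =
      (∑ x, (∑ z, T x z ^ 2 * (Q *ᵥ p) z - p x ^ 2)) / n := by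
  have total : ∑ z, (Q *ᵥ p) z = 1 := by rw [sum_mulVec_of_sum_col_eq_one_s17 hQ, hp]
  have unbiased (x : Fin a) : ∑ z, T x z * (Q *ᵥ p) z = p x := by
    change (T *ᵥ Q *ᵥ p) x = p x
    rw [mulVec_mulVec, hT, one_mulVec]
  have coordinate (x : Fin a) :
      ∑ y : Fin n → Fin b, (p x - averageEst T y x) ^ 2 * lik Q y p =
        (∑ z, T x z ^ 2 * (Q *ᵥ p) z - p x ^ 2) / n := by
    have := sum_mean_sub_average_sq_mul_prod (ι := Fin n) total (unbiased x) (by simpa using hn)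
    rwa [Fintype.card_fin] at this
  simp_rw [sum_mul]
  rw [sum_comm, sum_div]
  exact sum_congr rfl fun x _ => coordinate x

lemma MSEdistr_averageEst {μ : Measure (Fin a → ℝ)} [IsFiniteMeasureOnCompacts μ]
    (hμ : ∀ᵐ p ∂μ, p ∈ simplex a) (hQ : ∀ x, ∑ y, Q y x = 1) (hT : T * Q = 1) (hn : n ≠ 0) :
    MSEdistr (n := n) Q μ (averageEst T) =
      (∫ p, ∑ x, (∑ z, T x z ^ 2 * (Q *ᵥ p) z - p x ^ 2) ∂μ) / n := by
  rw [MSEdistr_eq_integral hμ, ← integral_div]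
  refine integral_congr_ae ?_
  filter_upwards [hμ] with p hp
  exact sum_averageEst_sq_error_mul_lik hQ hT hn hp.2

end LeftInverseEstimators

section RandomisedResponse

variable {ε : ℝ}

/-- The inverse of the randomised response matrix `RRmat ε`, for `ε ≠ 0`; averaging its columns
gives `Π_RR`. -/
def RRinv (ε : ℝ) : Matrix (Fin 2) (Fin 2) ℝ :=
  Matrix.of fun x y => if x = y then exp ε / (exp ε - 1) else -1 / (exp ε - 1)

lemma exp_sub_one_ne_zero (hε : ε ≠ 0) : exp ε - 1 ≠ 0 :=
  sub_ne_zero.mpr (mt (exp_eq_one_iff ε).mp hε)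

lemma sum_RRmat (ε : ℝ) (x : Fin 2) : ∑ y, RRmat ε y x = 1 := by
  have : exp ε + 1 ≠ 0 := by positivity
  fin_cases x <;> simp [RRmat] <;> field_simp
  ring

lemma RRinv_mul_RRmat (hε : ε ≠ 0) : RRinv ε * RRmat ε = 1 := by
  have h_sub := exp_sub_one_ne_zero hε
  have h_add : exp ε + 1 ≠ 0 := by positivity
  ext x y
  fin_cases x <;> fin_cases y <;> simp [RRinv, RRmat, mul_apply] <;> field_simp <;> ring

lemma PiRR_eq_averageEst (ε : ℝ) {n : ℕ} :
    PiRR ε (n := n) = averageEst (RRinv ε) := by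
  ext y x
  have entry (z : Fin 2) :
      RRinv ε x z = ((exp ε + 1) * (if z = x then 1 else 0) - 1) / (exp ε - 1) := by
    simp only [RRinv, of_apply, eq_comm (a := x)]
    split_ifs <;> ring
  simp_rw [averageEst, entry, ← sum_div, sum_sub_distrib, ← mul_sum]
  simp [PiRR, sTally, div_div, mul_comm]

lemma sum_RRinv_sq (hε : ε ≠ 0) (y : Fin 2) :
    ∑ x, RRinv ε x y ^ 2 = 2 * (exp ε / (exp ε - 1) ^ 2) + 1 := by
  have := exp_sub_one_ne_zero hε
  fin_cases y <;> simp [RRinv] <;> field_simp <;> ring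

lemma sum_variance_RRinv (hε : ε ≠ 0) {p : Fin 2 → ℝ} (hp : ∑ x, p x = 1) :
    ∑ x, (∑ z, RRinv ε x z ^ 2 * (RRmat ε *ᵥ p) z - p x ^ 2) =
      2 * (exp ε / (exp ε - 1) ^ 2 + p 0 * p 1) := by
  have second_moment : ∑ x, ∑ z, RRinv ε x z ^ 2 * (RRmat ε *ᵥ p) z =
      2 * (exp ε / (exp ε - 1) ^ 2) + 1 := by
    rw [sum_comm]
    simp_rw [← sum_mul, sum_RRinv_sq hε, ← mul_sum,
      sum_mulVec_of_sum_col_eq_one_s17 (sum_RRmat ε), hp, mul_one]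
  rw [sum_sub_distrib, second_moment]
  rw [Fin.sum_univ_two] at hp ⊢
  linear_combination (-(p 0 + p 1) - 1) * hp

end RandomisedResponse

/-- exact distribution-estimation MSE of randomised response. -/
theorem MSEdistr_RR (ε : ℝ) (hε : 0 < ε) {n : ℕ} (hn : 1 ≤ n)
    (μ : Measure (Fin 2 → ℝ)) [IsProbabilityMeasure μ]
    (hμsupp : μ (simplex 2)ᶜ = 0) :
    MSEdistr (n := n) (RRmat ε) μ (PiRR ε) =
      2 / (n : ℝ) * (Real.exp ε / (Real.exp ε - 1) ^ 2 + ∫ p, p 0 * p 1 ∂μ) := by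
  have hμ : ∀ᵐ p ∂μ, p ∈ simplex 2 := hμsupp
  have integrable_mul : Integrable (fun p : Fin 2 → ℝ => p 0 * p 1) μ :=
    integrable_of_continuous_of_ae_mem_isCompact (isCompact_simplex 2) hμ (by fun_prop)
  calc MSEdistr (n := n) (RRmat ε) μ (PiRR ε)
      = (∫ p, ∑ x, (∑ z, RRinv ε x z ^ 2 * (RRmat ε *ᵥ p) z - p x ^ 2) ∂μ) / n := by
        rw [PiRR_eq_averageEst, MSEdistr_averageEst hμ (sum_RRmat ε) (RRinv_mul_RRmat hε.ne')
          (Nat.one_le_iff_ne_zero.mp hn)]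
    _ = (∫ p, 2 * (exp ε / (exp ε - 1) ^ 2 + p 0 * p 1) ∂μ) / n := by
        congr 1
        refine integral_congr_ae ?_
        filter_upwards [hμ] with p hp
        exact sum_variance_RRinv hε.ne' hp.2
    _ = 2 / (n : ℝ) * (exp ε / (exp ε - 1) ^ 2 + ∫ p, p 0 * p 1 ∂μ) := by
        rw [integral_const_mul, integral_add (integrable_const _) integrable_mul, integral_const,
          probReal_univ, one_smul, mul_div_right_comm]

end
end
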